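/- Let K be a field of characteristic zero and let A be an associative (not necessarily unital) K-algebra satisfying x³ = 0 for all x ∈ A and the standard identity of degree 4, S₄(x₁,x₂,x₃,x₄) = Σ_{σ∈S₄} sign(σ)·x_{σ(1)}x_{σ(2)}x_{σ(3)}x_{σ(4)} = 0 for all x₁,…,x₄ ∈ A. Then x(yz − zy)x² = 0 for all x, y, z ∈ A. -/

import Mathlib

/-- The product `x 0 * x 1 * ⋯ * x n` of a nonempty tuple in a (possibly non-unital)
multiplicative structure. -/
def prodTuple {A : Type*} [Mul A] {n : ℕ} (x : Fin (n + 1) → A) : A :=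
  (List.ofFn fun i : Fin n => x i.succ).foldl (· * ·) (x 0)

/-- The standard polynomial `S_{n+1}(x 0, …, x n) = Σ_σ sign σ • x (σ 0) * ⋯ * x (σ n)`,
the sum over all permutations of `{0, …, n}`. -/
def stdPoly {A : Type*} [NonUnitalRing A] {n : ℕ} (x : Fin (n + 1) → A) : A :=
  ∑ σ : Equiv.Perm (Fin (n + 1)), (Equiv.Perm.sign σ : ℤ) • prodTuple (x ∘ σ)

theorem cube_lin {A : Type*} [NonUnitalRing A] (h1 : ∀ x : A, x * x * x = 0) (a b c : A) :
    a * b * c + a * c * b + b * a * c + b * c * a + c * a * b + c * b * a = 0 := by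
  have e : a * b * c + a * c * b + b * a * c + b * c * a + c * a * b + c * b * a
      = (a + b + c) * (a + b + c) * (a + b + c) - (a + b) * (a + b) * (a + b)
        - (a + c) * (a + c) * (a + c) - (b + c) * (b + c) * (b + c)
        + a * a * a + b * b * b + c * c * c := by
    simp only [mul_add, add_mul, mul_assoc]
    abel
  rw [e]
  simp only [h1]
  simp

theorem std_four {A : Type*} [NonUnitalRing A] (a b c d : A) :
    stdPoly ![a, b, c, d] =
      a*b*c*d - a*b*d*c - a*c*b*d + a*c*d*b + a*d*b*c - a*d*c*b
      - b*a*c*d + b*a*d*c + b*c*a*d - b*c*d*a - b*d*a*c + b*d*c*a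
      + c*a*b*d - c*a*d*b - c*b*a*d + c*b*d*a + c*d*a*b - c*d*b*a
      - d*a*b*c + d*a*c*b + d*b*a*c - d*b*c*a - d*c*a*b + d*c*b*a := by
  have e1 : ∀ (p : Fin 4) (s : Equiv.Perm (Fin 3)), Equiv.Perm.decomposeFin.symm (p, s) 2 = Equiv.swap 0 p (s 1).succ :=
    fun p s => Equiv.Perm.decomposeFin_symm_apply_succ s p 1
  have e2 : ∀ (p : Fin 4) (s : Equiv.Perm (Fin 3)), Equiv.Perm.decomposeFin.symm (p, s) 3 = Equiv.swap 0 p (s 2).succ :=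
    fun p s => Equiv.Perm.decomposeFin_symm_apply_succ s p 2
  have e3 : ∀ (p : Fin 3) (s : Equiv.Perm (Fin 2)), Equiv.Perm.decomposeFin.symm (p, s) 2 = Equiv.swap 0 p (s 1).succ :=
    fun p s => Equiv.Perm.decomposeFin_symm_apply_succ s p 1
  unfold stdPoly
  simp [prodTuple, Finset.univ_perm_fin_succ, Finset.sum_map, ← Finset.univ_product_univ, Finset.sum_product, Fin.sum_univ_succ, Equiv.Perm.decomposeFin.symm_sign, e1, e2, e3, Equiv.swap_apply_def]
  abel

/-- Let `K` be a field of characteristic zero and `A` an associative (not necessarily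
unital) `K`-algebra satisfying `x³ = 0` and the standard identity of degree 4,
`S₄(x₁,…,x₄) = 0`. Then `x(yz - zy)x² = 0` for all `x, y, z ∈ A`. -/
theorem stmt_17 (K : Type*) [Field K] [CharZero K]
    (A : Type*) [NonUnitalRing A] [Module K A] [SMulCommClass K A A] [IsScalarTower K A A]
    (h1 : ∀ x : A, x * x * x = 0)
    (h2 : ∀ x : Fin 4 → A, stdPoly x = 0) :
    ∀ x y z : A, x * (y * z - z * y) * (x * x) = 0 := by
  intro x y z
  have hT := cube_lin h1
  have hS := h2 ![x, x * x, y, z]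
  rw [std_four] at hS
  have key : (12 : ℤ) • (x * (y * z - z * y) * (x * x)) =
      (-1 : ℤ) • (((x) * (x) * (x) + (x) * (x) * (x) + (x) * (x) * (x) + (x) * (x) * (x) + (x) * (x) * (x) + (x) * (x) * (x)) * (y * z))
      + (1 : ℤ) • (((x) * (x) * (x) + (x) * (x) * (x) + (x) * (x) * (x) + (x) * (x) * (x) + (x) * (x) * (x) + (x) * (x) * (x)) * (z * y))
      + (-1 : ℤ) • (((x) * (x) * (x * y) + (x) * (x * y) * (x) + (x) * (x) * (x * y) + (x) * (x * y) * (x) + (x * y) * (x) * (x) + (x * y) * (x) * (x)) * (z))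
      + (1 : ℤ) • (((x) * (x) * (x * z) + (x) * (x * z) * (x) + (x) * (x) * (x * z) + (x) * (x * z) * (x) + (x * z) * (x) * (x) + (x * z) * (x) * (x)) * (y))
      + (-2 : ℤ) • (((x) * (x) * (y) + (x) * (y) * (x) + (x) * (x) * (y) + (x) * (y) * (x) + (y) * (x) * (x) + (y) * (x) * (x)) * (z * x))
      + (2 : ℤ) • (((x) * (x) * (z) + (x) * (z) * (x) + (x) * (x) * (z) + (x) * (z) * (x) + (z) * (x) * (x) + (z) * (x) * (x)) * (y * x))
      + (-2 : ℤ) • (((x) * (x * y) * (z) + (x) * (z) * (x * y) + (x * y) * (x) * (z) + (x * y) * (z) * (x) + (z) * (x) * (x * y) + (z) * (x * y) * (x)) * (x))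
      + (2 : ℤ) • (((x) * (x * z) * (y) + (x) * (y) * (x * z) + (x * z) * (x) * (y) + (x * z) * (y) * (x) + (y) * (x) * (x * z) + (y) * (x * z) * (x)) * (x))
      + (6 : ℤ) • ((x) * ((x) * (x) * (y * z) + (x) * (y * z) * (x) + (x) * (x) * (y * z) + (x) * (y * z) * (x) + (y * z) * (x) * (x) + (y * z) * (x) * (x)))
      + (-6 : ℤ) • ((x) * ((x) * (x) * (z * y) + (x) * (z * y) * (x) + (x) * (x) * (z * y) + (x) * (z * y) * (x) + (z * y) * (x) * (x) + (z * y) * (x) * (x)))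
      + (-4 : ℤ) • ((x) * ((x) * (x * y) * (z) + (x) * (z) * (x * y) + (x * y) * (x) * (z) + (x * y) * (z) * (x) + (z) * (x) * (x * y) + (z) * (x * y) * (x)))
      + (4 : ℤ) • ((x) * ((x) * (x * z) * (y) + (x) * (y) * (x * z) + (x * z) * (x) * (y) + (x * z) * (y) * (x) + (y) * (x) * (x * z) + (y) * (x * z) * (x)))
      + (2 : ℤ) • (x * (x * x) * y * z - x * (x * x) * z * y - x * y * (x * x) * z + x * y * z * (x * x) + x * z * (x * x) * y - x * z * y * (x * x) - (x * x) * x * y * z + (x * x) * x * z * y + (x * x) * y * x * z - (x * x) * y * z * x - (x * x) * z * x * y + (x * x) * z * y * x + y * x * (x * x) * z - y * x * z * (x * x) - y * (x * x) * x * z + y * (x * x) * z * x + y * z * x * (x * x) - y * z * (x * x) * x - z * x * (x * x) * y + z * x * y * (x * x) + z * (x * x) * x * y - z * (x * x) * y * x - z * y * x * (x * x) + z * y * (x * x) * x) := by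
    simp only [mul_add, add_mul, mul_sub, sub_mul, mul_assoc]
    abel
  rw [hS] at key
  simp only [hT, mul_zero, zero_mul, smul_zero, add_zero] at key
  have k2 : (12 : K) • (x * (y * z - z * y) * (x * x)) = 0 := by
    rw [← key, ← Int.cast_smul_eq_zsmul K]
    norm_num
  exact (smul_eq_zero.mp k2).resolve_left (by norm_num)
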